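/- arXiv:2605.23519 — 2 statements merged into one kernel-verified Lean document; each statement's English description precedes it below -/
import Mathlib

section
/- For every m ≥ 1, the exponential growth constant α_m = lim_{n→∞} (a_n^{(m)})^{1/n} exists; the growth constants satisfy α_m ≤ α_{m+1} for every m ≥ 1, and C_{m−1}^{1/(m+1)} ≤ α_m < 4 for every m ≥ 1, where C_j denotes the j-th Catalan number. Consequently lim_{m→∞} α_m = 4; more precisely, there exist a constant K > 0 and an integer M such that 0 < 4 − α_m ≤ K · (log m)/m for all m ≥ M. -/
/-- `π` avoids the pattern 132: there are no indices `i < j < k` with `π i < π k < π j`. -/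
def Avoids132 {n : ℕ} (π : Equiv.Perm (Fin n)) : Prop :=
  ¬ ∃ i j k : Fin n, i < j ∧ j < k ∧ π i < π k ∧ π k < π j

/-- `π` is `m`-bounded: adjacent entries differ by at most `m`. -/
def MBounded (m : ℕ) {n : ℕ} (π : Equiv.Perm (Fin n)) : Prop :=
  ∀ i : ℕ, ∀ h : i + 1 < n,
    |(((π ⟨i + 1, h⟩ : Fin n) : ℕ) : ℤ) - (((π ⟨i, by omega⟩ : Fin n) : ℕ) : ℤ)| ≤ (m : ℤ)

/-- `a_n^{(m)}`: the number of `m`-bounded 132-avoiding permutations of length `n`. -/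
noncomputable def aCount (m n : ℕ) : ℕ :=
  Nat.card {π : Equiv.Perm (Fin n) // Avoids132 π ∧ MBounded m π}


open BinaryTree in
/-- the one-line notation (values starting at 0) encoded by a binary tree -/
def tl : BinaryTree Unit → List ℕ
  | .nil => []
  | .node _ L R => (tl L).map (· + R.numNodes) ++ (L.numNodes + R.numNodes) :: tl R

/-- `n` minus the first entry -/
def fd : BinaryTree Unit → ℕ
  | .nil => 0
  | .node _ L _ => fd L + 1

/-- `n` minus the last entry -/
def ed : BinaryTree Unit → ℕ
  | .nil => 0
  | .node _ L R => if R = .nil then 1 else ed R + L.numNodes + 1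

/-- tree version of boundedness -/
def BT (m : ℕ) : BinaryTree Unit → Prop
  | .nil => True
  | .node _ L R => BT m L ∧ BT m R ∧ (L ≠ .nil → ed L ≤ m) ∧ (R ≠ .nil → fd R + L.numNodes ≤ m)

/-- list version of 132-avoidance -/
def AvL : List ℕ → Prop
  | [] => True
  | a :: l => l.Pairwise (fun b c => ¬ (a < c ∧ c < b)) ∧ AvL l

/-- closeness relation -/
def Near (m a b : ℕ) : Prop := b ≤ a + m ∧ a ≤ b + m

/-- the common set of lists -/
def LS (m n : ℕ) : Set (List ℕ) :=
  {l | l.length = n ∧ l.Nodup ∧ (∀ x ∈ l, x < n) ∧ AvL l ∧ l.IsChain (Near m)}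

theorem numNodes_eq_zero_iff (t : BinaryTree Unit) : t.numNodes = 0 ↔ t = .nil := by
  cases t <;> simp [BinaryTree.numNodes]

theorem tl_length (t : BinaryTree Unit) : (tl t).length = t.numNodes := by
  induction t with
  | nil => simp [tl]
  | node a L R hL hR => simp [tl, hL, hR]; omega

theorem tl_lt (t : BinaryTree Unit) : ∀ x ∈ tl t, x < t.numNodes := by
  induction t with
  | nil => simp [tl]
  | node a L R hL hR =>
    intro x hx
    simp only [tl, List.mem_append, List.mem_map, List.mem_cons] at hx
    simp only [BinaryTree.numNodes]
    rcases hx with ⟨y, hy, rfl⟩ | rfl | hx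
    · have := hL y hy; omega
    · omega
    · have := hR x hx; omega

theorem tl_nodup (t : BinaryTree Unit) : (tl t).Nodup := by
  induction t with
  | nil => simp [tl]
  | node a L R hL hR =>
    simp only [tl]
    rw [List.nodup_append]
    refine ⟨hL.map (fun a b h => by simpa using h), ?_, ?_⟩
    · rw [List.nodup_cons]
      refine ⟨fun h => ?_, hR⟩
      have := tl_lt R _ h; omega
    · intro x hx y hy
      simp only [List.mem_map] at hx
      obtain ⟨z, hz, rfl⟩ := hx
      have := tl_lt L z hz
      simp only [List.mem_cons] at hy
      rcases hy with rfl | hy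
      · omega
      · have := tl_lt R y hy; omega

theorem AvL_map (r : ℕ) (l : List ℕ) : AvL (l.map (· + r)) ↔ AvL l := by
  induction l with
  | nil => simp [AvL]
  | cons a l ih => simp [AvL, ih, List.pairwise_map]

theorem AvL_append (M : ℕ) (X R : List ℕ) (hX : ∀ x ∈ X, x < M) (hR : ∀ x ∈ R, x < M)
    (hX' : X.Nodup) (hd : ∀ x ∈ X, ∀ y ∈ R, x ≠ y) :
    AvL (X ++ M :: R) ↔ AvL X ∧ AvL R ∧ ∀ x ∈ X, ∀ y ∈ R, y < x := by
  induction X with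
  | nil =>
    simp only [List.nil_append, AvL, true_and, List.not_mem_nil, false_imp_iff, implies_true,
      and_true, and_iff_right_iff_imp]
    intro _
    apply List.pairwise_of_forall_mem_list
    intro b _ c hc
    have := hR c hc
    omega
  | cons a X ih =>
    simp only [List.mem_cons, forall_eq_or_imp] at hX hd
    rw [List.nodup_cons] at hX'
    have ih := ih hX.2 hX'.2 hd.2
    simp only [List.cons_append, AvL, List.pairwise_append, List.pairwise_cons, List.mem_cons,
      forall_eq_or_imp, ih]
    constructor
    · rintro ⟨⟨h1, ⟨h2, h3⟩, h4⟩, h5, h6, h7⟩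
      refine ⟨⟨h1, h5⟩, h6, ?_, h7⟩
      intro y hy
      have := h2 y hy
      have := hR y hy
      have := hd.1 y hy
      omega
    · rintro ⟨⟨h1, h5⟩, h6, h7, h8⟩
      refine ⟨⟨h1, ⟨?_, ?_⟩, ?_⟩, h5, h6, h8⟩
      · intro y hy
        have := h7 y hy
        omega
      · apply List.pairwise_of_forall_mem_list
        intro b _ c hc
        have := h7 c hc
        omega
      · intro x hx
        refine ⟨?_, ?_⟩
        · have := hX.2 x hx
          omega
        · intro y hy
          have := h7 y hy
          omega

theorem tl_AvL (t : BinaryTree Unit) : AvL (tl t) := by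
  induction t with
  | nil => simp [tl, AvL]
  | node a L R hL hR =>
    have hn := tl_nodup (.node a L R)
    simp only [tl] at hn ⊢
    rw [List.nodup_append] at hn
    have h3 : ∀ x ∈ (tl L).map (· + R.numNodes), ∀ y ∈ tl R, y < x := by
      intro x hx y hy
      simp only [List.mem_map] at hx
      obtain ⟨z, hz, rfl⟩ := hx
      have := tl_lt R y hy
      omega
    rw [AvL_append]
    · exact ⟨(AvL_map _ _).2 hL, hR, h3⟩
    · intro x hx
      simp only [List.mem_map] at hx
      obtain ⟨z, hz, rfl⟩ := hx
      have := tl_lt L z hz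
      omega
    · intro x hx
      have := tl_lt R x hx
      omega
    · exact hn.1
    · intro x hx y hy
      have := h3 x hx y hy
      omega

theorem tl_eq_nil (t : BinaryTree Unit) : tl t = [] ↔ t = .nil := by
  rw [← List.length_eq_zero_iff, tl_length, numNodes_eq_zero_iff]

theorem fd_le (t : BinaryTree Unit) : fd t ≤ t.numNodes := by
  induction t with
  | nil => simp [fd]
  | node a L R hL hR => simp [fd]; omega

theorem fd_pos (t : BinaryTree Unit) (h : t ≠ .nil) : 1 ≤ fd t := by
  cases t with
  | nil => simp at h
  | node a L R => simp [fd]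

theorem ed_pos (t : BinaryTree Unit) (h : t ≠ .nil) : 1 ≤ ed t := by
  cases t with
  | nil => simp at h
  | node a L R => simp only [ed]; split_ifs <;> omega

theorem ed_le (t : BinaryTree Unit) : ed t ≤ t.numNodes := by
  induction t with
  | nil => simp [ed]
  | node a L R hL hR => simp only [ed, BinaryTree.numNodes]; split_ifs <;> omega

theorem tl_head (t : BinaryTree Unit) (h : t ≠ .nil) :
    (tl t).head? = some (t.numNodes - fd t) := by
  induction t with
  | nil => simp at h
  | node a L R hL hR =>
    by_cases hn : L = .nil
    · subst hn
      simp [tl, fd]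
    · have := fd_le L
      simp [tl, fd, hL hn]
      omega

theorem tl_last (t : BinaryTree Unit) (h : t ≠ .nil) :
    (tl t).getLast? = some (t.numNodes - ed t) := by
  induction t with
  | nil => simp at h
  | node a L R hL hR =>
    by_cases hn : R = .nil
    · subst hn
      simp [tl, ed]
    · have := ed_le R
      simp [tl, ed, hn, List.getLast?_append, List.getLast?_cons, hR hn]
      omega

theorem tl_chain (m : ℕ) (t : BinaryTree Unit) : (tl t).IsChain (Near m) ↔ BT m t := by
  induction t with
  | nil => simp [tl, BT]
  | node a L R hL hR =>
    simp only [tl, BT]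
    rw [List.isChain_append, ← hL, ← hR, List.isChain_map, List.isChain_cons]
    have e : (fun a b => Near m (a + R.numNodes) (b + R.numNodes)) = Near m := by
      funext a b
      simp only [Near, eq_iff_iff]
      omega
    rw [e]
    refine and_congr_right fun _ => ?_
    have hRR : (∀ y ∈ (tl R).head?, Near m (L.numNodes + R.numNodes) y) ↔
        (R ≠ .nil → fd R + L.numNodes ≤ m) := by
      by_cases hn : R = .nil
      · subst hn; simp [tl]
      · rw [tl_head R hn]
        have := fd_le R
        simp [hn, Near]
        omega
    have hLL : (∀ x ∈ ((tl L).map (· + R.numNodes)).getLast?,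
        ∀ y ∈ ((L.numNodes + R.numNodes) :: tl R).head?, Near m x y) ↔
        (L ≠ .nil → ed L ≤ m) := by
      by_cases hn : L = .nil
      · subst hn; simp [tl]
      · rw [List.getLast?_map, tl_last L hn]
        have := ed_le L
        simp [hn, Near]
        omega
    rw [hRR, hLL]
    tauto

theorem tl_inj : ∀ s t : BinaryTree Unit, tl s = tl t → s = t := by
  intro s
  induction s with
  | nil => intro t h; exact ((tl_eq_nil t).1 h.symm).symm
  | node a L R hL hR =>
    intro t h
    cases t with
    | nil => simp [tl] at h
    | node b L' R' =>
      have hlen := congrArg List.length h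
      rw [tl_length, tl_length] at hlen
      simp only [BinaryTree.numNodes] at hlen
      simp only [tl] at h
      have hM : L.numNodes + R.numNodes = L'.numNodes + R'.numNodes := by omega
      rw [hM] at h
      have h1 : L'.numNodes + R'.numNodes ∉ (tl L).map (· + R.numNodes) := by
        simp only [List.mem_map, not_exists, not_and]
        intro x hx
        have := tl_lt L x hx
        omega
      have h2 : L'.numNodes + R'.numNodes ∉ (tl R) := by
        intro hx
        have := tl_lt R _ hx
        omega
      have h1' : L'.numNodes + R'.numNodes ∉ (tl L').map (· + R'.numNodes) := by
        simp only [List.mem_map, not_exists, not_and]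
        intro x hx
        have := tl_lt L' x hx
        omega
      have h2' : L'.numNodes + R'.numNodes ∉ (tl R') := by
        intro hx
        have := tl_lt R' _ hx
        omega
      have := (List.append_cons_inj_of_notMem h1 h2).1 h
      obtain ⟨e1, -, e2⟩ := this
      have e3 := hR _ e2
      subst e3
      have e4 := hL _ (List.map_injective_iff.2 (fun a b h => by simpa using h) e1)
      subst e4
      rfl

theorem tl_surj : ∀ n : ℕ, ∀ l : List ℕ, l.length = n → l.Nodup → (∀ x ∈ l, x < n) → AvL l →
    ∃ t, tl t = l := by
  intro n
  induction n using Nat.strong_induction_on with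
  | _ n ih =>
  intro l hlen hnd hlt hav
  rcases Nat.eq_zero_or_pos n with rfl | hn
  · exact ⟨.nil, by simp [tl, List.length_eq_zero_iff.1 hlen]⟩
  have hfull : ∀ x < n, x ∈ l := by
    intro x hx
    have : l.toFinset = Finset.range n := by
      apply Finset.eq_of_subset_of_card_le
      · intro y hy
        simpa using hlt y (by simpa using hy)
      · rw [List.toFinset_card_of_nodup hnd, hlen]; simp
    have h2 : x ∈ l.toFinset := by rw [this]; simpa using hx
    simpa using h2
  obtain ⟨X, R, rfl⟩ := List.append_of_mem (hfull (n - 1) (by omega))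
  rw [List.nodup_append, List.nodup_cons] at hnd
  obtain ⟨hX, ⟨hMR, hR⟩, hd⟩ := hnd
  have hXl : ∀ x ∈ X, x < n - 1 := by
    intro x hx
    have h1 := hlt x (by simp [hx])
    have h2 := hd x hx (n - 1) (by simp)
    omega
  have hRl : ∀ x ∈ R, x < n - 1 := by
    intro x hx
    have h1 := hlt x (by simp [hx])
    have h2 : x ≠ n - 1 := fun h => hMR (h ▸ hx)
    omega
  rw [AvL_append _ _ _ hXl hRl hX (fun x hx y hy => hd x hx y (by simp [hy]))] at hav
  obtain ⟨hav1, hav2, hav3⟩ := hav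
  simp only [List.length_append, List.length_cons] at hlen
  have hRr : ∀ y ∈ R, y < R.length := by
    intro y hy
    have : Finset.range (y + 1) ⊆ R.toFinset := by
      intro z hz
      simp only [Finset.mem_range] at hz
      have h0 := hRl y hy
      have h1 := hfull z (by omega)
      simp only [List.mem_append, List.mem_cons] at h1
      rcases h1 with h1 | h1 | h1
      · have := hav3 z h1 y hy
        omega
      · omega
      · simpa using h1
    have := Finset.card_le_card this
    rw [List.toFinset_card_of_nodup hR] at this
    simp at this
    omega
  have hXr : ∀ x ∈ X, R.length ≤ x := by
    intro x hx
    have : R.toFinset ⊆ Finset.range x := by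
      intro z hz
      simpa using hav3 x hx z (by simpa using hz)
    have := Finset.card_le_card this
    rw [List.toFinset_card_of_nodup hR] at this
    simpa using this
  obtain ⟨tR, htR⟩ := ih R.length (by omega) R rfl hR hRr hav2
  have hXX : (X.map (· - R.length)).map (· + R.length) = X := by
    rw [List.map_map]
    conv_rhs => rw [← List.map_id X]
    apply List.map_congr_left
    intro x hx
    have := hXr x hx
    simp
    omega
  obtain ⟨tL, htL⟩ := ih X.length (by omega) (X.map (· - R.length)) (by simp)
    (by
      apply List.Nodup.of_map (· + R.length)
      rw [hXX]; exact hX)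
    (by
      intro x hx
      simp only [List.mem_map] at hx
      obtain ⟨z, hz, rfl⟩ := hx
      have := hXl z hz
      have := hXr z hz
      omega)
    (by rw [← AvL_map R.length, hXX]; exact hav1)
  refine ⟨.node () tL tR, ?_⟩
  have e1 : tL.numNodes = X.length := by rw [← tl_length, htL]; simp
  have e2 : tR.numNodes = R.length := by rw [← tl_length, htR]
  simp only [tl, htL, htR, e1, e2, hXX]
  congr 2
  omega

theorem LS_eq_tree (m n : ℕ) : LS m n = Set.image tl {t | t.numNodes = n ∧ BT m t} := by
  ext l
  simp only [LS, Set.mem_ofPred_eq, Set.mem_image]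
  constructor
  · rintro ⟨h1, h2, h3, h4, h5⟩
    obtain ⟨t, rfl⟩ := tl_surj n l h1 h2 h3 h4
    exact ⟨t, ⟨by rw [← tl_length, h1], (tl_chain m t).1 h5⟩, rfl⟩
  · rintro ⟨t, ⟨rfl, h⟩, rfl⟩
    exact ⟨tl_length t, tl_nodup t, tl_lt t, tl_AvL t, (tl_chain m t).2 h⟩

theorem AvL_ofFn : ∀ (n : ℕ) (f : Fin n → ℕ), AvL (List.ofFn f) ↔
    ∀ i j k : Fin n, i < j → j < k → ¬ (f i < f k ∧ f k < f j) := by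
  intro n
  induction n with
  | zero => intro f; simp [AvL]
  | succ n ih =>
    intro f
    rw [List.ofFn_succ, AvL, ih, List.pairwise_ofFn]
    constructor
    · rintro ⟨h1, h2⟩ i j k hij hjk
      obtain ⟨j', rfl⟩ := Fin.exists_succ_eq.2 (Fin.ne_zero_of_lt hij)
      obtain ⟨k', rfl⟩ := Fin.exists_succ_eq.2 (Fin.ne_zero_of_lt hjk)
      rcases Fin.eq_zero_or_eq_succ i with rfl | ⟨i', rfl⟩
      · exact h1 (by simpa using hjk)
      · exact h2 i' j' k' (by simpa using hij) (by simpa using hjk)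
    · intro h
      refine ⟨fun j k hjk => h 0 _ _ (Fin.succ_pos _) (by simpa using hjk), fun i j k hij hjk =>
        h _ _ _ (by simpa using hij) (by simpa using hjk)⟩

theorem LS_eq_perm (m n : ℕ) : LS m n =
    Set.image (fun π : Equiv.Perm (Fin n) => List.ofFn (fun i => (π i : ℕ)))
      {π | Avoids132 π ∧ MBounded m π} := by
  have key : ∀ π : Equiv.Perm (Fin n), (Avoids132 π ∧ MBounded m π) ↔
      (AvL (List.ofFn (fun i => (π i : ℕ))) ∧
        (List.ofFn (fun i => (π i : ℕ))).IsChain (Near m)) := by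
    intro π
    refine and_congr ?_ ?_
    · rw [AvL_ofFn]
      simp only [Avoids132, not_exists, not_and, Fin.lt_def]
    · rw [List.isChain_iff_getElem]
      simp only [MBounded, List.length_ofFn, List.getElem_ofFn, Near]
      refine forall_congr' fun i => forall_congr' fun h => ?_
      rw [abs_le]
      omega
  ext l
  simp only [LS, Set.mem_ofPred_eq, Set.mem_image]
  constructor
  · rintro ⟨h1, h2, h3, h4, h5⟩
    subst h1
    let f : Fin l.length → Fin l.length := fun i => ⟨l[i], h3 _ (List.getElem_mem _)⟩
    have hf : Function.Injective f := by
      intro i j hij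
      simp only [f, Fin.mk.injEq] at hij
      exact Fin.ext ((List.Nodup.getElem_inj_iff h2).1 hij)
    let π := Equiv.ofBijective f (Finite.injective_iff_bijective.1 hf)
    have hπ : List.ofFn (fun i => (π i : ℕ)) = l := by
      simp [π, f]
    exact ⟨π, (key π).2 (by rw [hπ]; exact ⟨h4, h5⟩), hπ⟩
  · rintro ⟨π, h, rfl⟩
    refine ⟨by simp, ?_, ?_, (key π).1 h⟩
    · rw [List.nodup_ofFn]
      exact Fin.val_injective.comp π.injective
    · intro x hx
      rw [List.mem_ofFn] at hx
      obtain ⟨i, rfl⟩ := hx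
      exact (π i).2

open Classical in
/-- the finite set of trees -/
noncomputable def TS (m n : ℕ) : Finset (BinaryTree Unit) :=
  (BinaryTree.treesOfNumNodesEq n).filter (BT m)

theorem mem_TS {m n : ℕ} {t : BinaryTree Unit} : t ∈ TS m n ↔ t.numNodes = n ∧ BT m t := by
  simp [TS, BinaryTree.mem_treesOfNumNodesEq]

theorem aCount_eq (m n : ℕ) : aCount m n = (TS m n).card := by
  have h1 : aCount m n = (LS m n).ncard := by
    rw [LS_eq_perm, Set.ncard_image_of_injective]
    · rfl
    · intro π σ h
      ext i
      exact congrFun (List.ofFn_injective h) i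
  rw [h1, LS_eq_tree, Set.ncard_image_of_injective _ (fun s t h => tl_inj s t h),
    ← Set.ncard_coe_finset]
  congr 1
  ext t
  simp [mem_TS]

theorem BT_of_le (m : ℕ) (t : BinaryTree Unit) (h : t.numNodes ≤ m + 1) : BT m t := by
  induction t with
  | nil => simp [BT]
  | node a L R hL hR =>
    simp only [BinaryTree.numNodes] at h
    have := ed_le L
    have := fd_le R
    exact ⟨hL (by omega), hR (by omega), fun _ => by omega, fun _ => by omega⟩

/-- replace the core of a tree by another tree -/
def graft (u : BinaryTree Unit) : BinaryTree Unit → BinaryTree Unit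
  | .nil => u
  | .node a L R =>
    if R = .nil then (if L = .nil then u else .node a (graft u L) .nil) else .node a L (graft u R)

theorem exists_cut (m : ℕ) (hm : 1 ≤ m) (i : ℕ) (hi : 1 ≤ i) (t : BinaryTree Unit)
    (ht : t ≠ .nil) (hB : BT m t) :
    ∃ u v : BinaryTree Unit, BT m u ∧ BT m v ∧ u.numNodes + v.numNodes = t.numNodes + 1 ∧
      u.numNodes ≤ i ∧ (i < u.numNodes + m ∨ u.numNodes = t.numNodes) ∧ v ≠ .nil ∧ graft u v = t ∧
      fd v ≤ fd t ∧ ed v ≤ ed t := by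
  induction t with
  | nil => simp at ht
  | node a L R hL hR =>
    by_cases hle : (BinaryTree.node a L R).numNodes ≤ i
    · refine ⟨.node a L R, .node () .nil .nil, hB, by simp [BT], by simp, hle, Or.inr rfl,
        by simp, by simp [graft], ?_, ?_⟩
      · simp [fd]
      · simpa [ed] using ed_pos _ ht
    · simp only [BinaryTree.numNodes] at hle
      simp only [BT] at hB
      obtain ⟨b1, b2, b3, b4⟩ := hB
      by_cases hn : R = .nil
      · subst hn
        simp only [BinaryTree.numNodes] at hle
        have hLn : L ≠ .nil := by
          rintro rfl
          simp at hle
          omega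
        obtain ⟨u, v, h1, h2, h3, h4, h5, h6, h7, h8, h9⟩ := hL hLn b1
        refine ⟨u, .node a v .nil, h1, ?_, ?_, h4, by left; omega, by simp, ?_, ?_, ?_⟩
        · simp only [BT]
          exact ⟨h2, trivial, fun _ => h9.trans (b3 hLn), by simp⟩
        · simp only [BinaryTree.numNodes]; omega
        · simp [graft, h6, h7]
        · simp only [fd]; omega
        · simp [ed]
      · obtain ⟨u, v, h1, h2, h3, h4, h5, h6, h7, h8, h9⟩ := hR hn b2
        have hp := fd_pos R hn
        have hb := b4 hn
        refine ⟨u, .node a L v, h1, ?_, ?_, h4, ?_, by simp, ?_, ?_, ?_⟩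
        · simp only [BT]
          exact ⟨b1, h2, b3, fun _ => by omega⟩
        · simp only [BinaryTree.numNodes]; omega
        · left; omega
        · simp [graft, h6, h7]
        · simp [fd]
        · simp only [ed, h6, hn, if_false]; omega

theorem TS_mono (m n : ℕ) (hm : 1 ≤ m) : (TS m n).card ≤ (TS m (n + 1)).card := by
  apply Finset.card_le_card_of_injOn
    (fun t => if fd t ≤ m then .node () .nil t else .node () t .nil)
  · intro t ht
    simp only [Finset.mem_coe, mem_TS] at ht ⊢
    obtain ⟨rfl, hB⟩ := ht
    split_ifs with h
    · refine ⟨by simp, ?_⟩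
      simp only [BT]
      exact ⟨trivial, hB, by simp, fun _ => by simpa using h⟩
    · refine ⟨by simp, ?_⟩
      simp only [BT]
      refine ⟨hB, trivial, fun hn => ?_, by simp⟩
      cases t with
      | nil => simp at hn
      | node a L R =>
        by_cases hR : R = .nil
        · simp [ed, hR, hm]
        · exfalso
          apply h
          simp only [BT] at hB
          have h1 := hB.2.2.2 hR
          have h2 := fd_pos R hR
          have h3 := fd_le L
          simp only [fd]
          omega
  · intro s hs t ht h
    simp only at h
    split_ifs at h with h1 h2 h2
    · simpa using h
    · simp only [BinaryTree.node.injEq, true_and] at h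
      rw [← h.1] at h2
      simp [fd] at h2
    · simp only [BinaryTree.node.injEq, true_and] at h
      rw [h.1] at h1
      simp [fd] at h1
    · simpa using h

theorem aCount_mono (m : ℕ) (hm : 1 ≤ m) : Monotone (aCount m) := by
  apply monotone_nat_of_le_succ
  intro n
  rw [aCount_eq, aCount_eq]
  exact TS_mono m n hm

theorem aCount_pos (m n : ℕ) (hm : 1 ≤ m) : 1 ≤ aCount m n := by
  refine le_trans ?_ (aCount_mono m hm (Nat.zero_le n))
  rw [aCount_eq]
  apply Finset.card_pos.2
  exact ⟨.nil, by simp [mem_TS, BT]⟩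

theorem aCount_le_catalan (m n : ℕ) : aCount m n ≤ catalan n := by
  classical
  rw [aCount_eq, ← BinaryTree.treesOfNumNodesEq_card_eq_catalan]
  exact Finset.card_filter_le _ _

theorem aCount_submul (m n i : ℕ) (hm : 1 ≤ m) (hi : 1 ≤ i) (hin : i ≤ n) :
    aCount m n ≤ m * (aCount m i * aCount m (n - i + m)) := by
  classical
  have hsub : TS m n ⊆ (Finset.range m).biUnion (fun j =>
      (TS m (i - j) ×ˢ TS m (n + 1 - (i - j))).image (fun p => graft p.1 p.2)) := by
    intro t ht
    rw [mem_TS] at ht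
    obtain ⟨rfl, hB⟩ := ht
    have htn : t ≠ .nil := by
      rintro rfl
      simp at hin
      omega
    obtain ⟨u, v, h1, h2, h3, h4, h5, h6, h7, -, -⟩ := exists_cut m hm i hi t htn hB
    simp only [Finset.mem_biUnion, Finset.mem_range, Finset.mem_image, Finset.mem_product, mem_TS]
    exact ⟨i - u.numNodes, by omega, (u, v), ⟨⟨by dsimp only; omega, h1⟩, by dsimp only; omega, h2⟩, h7⟩
  have h1 := (Finset.card_le_card hsub).trans Finset.card_biUnion_le
  rw [aCount_eq]
  refine h1.trans ?_
  have h2 : ∀ j ∈ Finset.range m, ((TS m (i - j) ×ˢ TS m (n + 1 - (i - j))).image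
      (fun p => graft p.1 p.2)).card ≤ aCount m i * aCount m (n - i + m) := by
    intro j hj
    simp only [Finset.mem_range] at hj
    refine Finset.card_image_le.trans ?_
    rw [Finset.card_product, ← aCount_eq, ← aCount_eq]
    exact Nat.mul_le_mul (aCount_mono m hm (by omega)) (aCount_mono m hm (by omega))
  simpa using Finset.sum_le_sum h2

theorem aCount_lower_aux (m : ℕ) (hm : 1 ≤ m) (q : ℕ) :
    catalan (m - 1) ^ q ≤ ((TS m (q * (m + 1) + 1)).filter (fun t => fd t = 1)).card := by
  induction q with
  | zero =>
    simp only [pow_zero]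
    apply Finset.card_pos.2
    exact ⟨.node () .nil .nil, by simp [mem_TS, BT, fd]⟩
  | succ q ih =>
    rw [pow_succ]
    refine (Nat.mul_le_mul_right _ ih).trans ?_
    rw [← BinaryTree.treesOfNumNodesEq_card_eq_catalan, ← Finset.card_product]
    apply Finset.card_le_card_of_injOn (fun p => .node () .nil (.node () p.2 p.1))
    · rintro ⟨t, L⟩ hp
      simp only [Finset.coe_product, Set.mem_prod, Finset.mem_coe, Finset.mem_filter, mem_TS,
        BinaryTree.mem_treesOfNumNodesEq] at hp ⊢
      obtain ⟨⟨⟨h1, h2⟩, h3⟩, h4⟩ := hp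
      have := ed_le L
      have := fd_le L
      refine ⟨⟨?_, ?_⟩, by simp [fd]⟩
      · simp only [BinaryTree.numNodes, h1, h4]
        rw [Nat.succ_mul]
        omega
      · simp only [BT, fd, BinaryTree.numNodes]
        exact ⟨trivial, ⟨BT_of_le m L (by omega), h2, fun _ => by omega, fun _ => by omega⟩,
          by simp, fun _ => by omega⟩
    · rintro ⟨t, L⟩ _ ⟨t', L'⟩ _ h
      simp only [BinaryTree.node.injEq, true_and] at h
      simp [h]

theorem aCount_lower (m : ℕ) (hm : 1 ≤ m) (q : ℕ) :
    catalan (m - 1) ^ q ≤ aCount m (q * (m + 1) + 1) := by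
  rw [aCount_eq]
  exact (aCount_lower_aux m hm q).trans (Finset.card_filter_le _ _)

theorem aCount_mono_m (m n : ℕ) : aCount m n ≤ aCount (m + 1) n := by
  apply Nat.card_le_card_of_injective
    (fun π : {π : Equiv.Perm (Fin n) // Avoids132 π ∧ MBounded m π} =>
      (⟨π.1, π.2.1, fun i h => (π.2.2 i h).trans (by simp)⟩ :
        {π : Equiv.Perm (Fin n) // Avoids132 π ∧ MBounded (m + 1) π}))
  intro a b h
  simpa [Subtype.ext_iff] using h

open Filter Topology in
theorem exists_growth (m : ℕ) (hm : 1 ≤ m) : ∃ L : ℝ,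
    Tendsto (fun n : ℕ => Real.log (aCount m n) / n) atTop (𝓝 L) ∧ L < Real.log 4 ∧
    Real.log (catalan (m - 1)) / ((m : ℝ) + 1) ≤ L := by
  have hm' : (1 : ℝ) ≤ m := by exact_mod_cast hm
  have hm0 : (0 : ℝ) < m := by linarith
  have hpos : ∀ n, (0 : ℝ) < aCount m n := fun n => by exact_mod_cast aCount_pos m n hm
  have hone : ∀ n, (1 : ℝ) ≤ aCount m n := fun n => by exact_mod_cast aCount_pos m n hm
  have hsubm : ∀ n i, 1 ≤ i → i ≤ n →
      Real.log (aCount m n) ≤ Real.log m + (Real.log (aCount m i) +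
        Real.log (aCount m (n - i + m))) := by
    intro n i hi hin
    rw [← Real.log_mul (hpos _).ne' (hpos _).ne', ← Real.log_mul hm0.ne'
      (mul_pos (hpos _) (hpos _)).ne']
    apply Real.log_le_log (hpos _)
    exact_mod_cast aCount_submul m n i hm hi hin
  let u : ℕ → ℝ := fun k => Real.log m + Real.log (aCount m (k + m))
  have hlogm : 0 ≤ Real.log m := Real.log_nonneg hm'
  have hu0 : ∀ k, 0 ≤ u k := fun k => add_nonneg hlogm (Real.log_nonneg (hone _))
  have hsub : Subadditive u := by
    intro i k
    have h := hsubm (i + k + m) (i + m) (by omega) (by omega)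
    have e : i + k + m - (i + m) + m = k + m := by omega
    rw [e] at h
    simp only [u]
    linarith
  have hbdd : BddBelow (Set.range fun n : ℕ => u n / n) := by
    refine ⟨0, ?_⟩
    rintro _ ⟨n, rfl⟩
    exact div_nonneg (hu0 n) (Nat.cast_nonneg n)
  have hlim := hsub.tendsto_lim hbdd
  have hL : Tendsto (fun n : ℕ => Real.log (aCount m n) / n) atTop (𝓝 hsub.lim) := by
    let c := 2 * Real.log m + Real.log (aCount m (2 * m))
    have h0 : Tendsto (fun n : ℕ => c / (n : ℝ)) atTop (𝓝 0) :=
      tendsto_const_div_atTop_nhds_zero_nat c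
    have h1 : Tendsto (fun n : ℕ => u n / n - c / (n : ℝ)) atTop (𝓝 hsub.lim) := by
      simpa using hlim.sub h0
    refine tendsto_of_tendsto_of_tendsto_of_le_of_le' h1 hlim ?_ ?_
    · filter_upwards [eventually_ge_atTop 1] with n hn
      rw [← sub_div]
      apply div_le_div_of_nonneg_right _ (Nat.cast_nonneg n)
      have h := hsubm (n + m) n hn (by omega)
      have e : n + m - n + m = 2 * m := by omega
      rw [e] at h
      simp only [u, c]
      linarith
    · filter_upwards with n
      apply div_le_div_of_nonneg_right _ (Nat.cast_nonneg n)
      have : Real.log (aCount m n) ≤ Real.log (aCount m (n + m)) := by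
        apply Real.log_le_log (hpos _)
        exact_mod_cast aCount_mono m hm (by omega)
      simp only [u]
      linarith
  refine ⟨hsub.lim, hL, ?_, ?_⟩
  · set k := m * 4 ^ m with hk
    have hkpos : 0 < k := by positivity
    refine (hsub.lim_le_div hbdd hkpos.ne').trans_lt ?_
    rw [div_lt_iff₀ (by exact_mod_cast hkpos), mul_comm, ← Real.log_pow]
    simp only [u]
    rw [← Real.log_mul hm0.ne' (hpos _).ne']
    apply Real.log_lt_log (mul_pos hm0 (hpos _))
    have key : m * aCount m (k + m) < 4 ^ k := by
      have h1 := aCount_le_catalan m (k + m)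
      have h2 := succ_mul_catalan_eq_centralBinom (k + m)
      have h3 : Nat.centralBinom (k + m) ≤ 4 ^ (k + m) := by
        rw [Nat.centralBinom]
        refine (Nat.choose_le_two_pow _ _).trans ?_
        rw [pow_mul]
        norm_num
      have h4 : (k + m + 1) * (m * aCount m (k + m)) ≤ k * 4 ^ k := by
        calc (k + m + 1) * (m * aCount m (k + m)) = m * ((k + m + 1) * aCount m (k + m)) := by ring
          _ ≤ m * ((k + m + 1) * catalan (k + m)) := by gcongr
          _ = m * Nat.centralBinom (k + m) := by rw [h2]
          _ ≤ m * 4 ^ (k + m) := by gcongr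
          _ = k * 4 ^ k := by rw [pow_add]; nth_rewrite 3 [hk]; ring
      have h5 : 0 < 4 ^ k := by positivity
      by_contra hcon
      push Not at hcon
      have h6 : (k + m + 1) * 4 ^ k ≤ (k + m + 1) * (m * aCount m (k + m)) := by gcongr
      have h7 : (k + m + 1) * 4 ^ k ≤ k * 4 ^ k := h6.trans h4
      have h8 := Nat.le_of_mul_le_mul_right h7 h5
      omega
    exact_mod_cast key
  · have hs : Tendsto (fun q : ℕ => q * (m + 1) + 1) atTop atTop := by
      apply tendsto_atTop_mono (f := fun q : ℕ => q) _ tendsto_id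
      intro q
      nlinarith
    have h1 := hL.comp hs
    have hC : (0 : ℝ) < catalan (m - 1) := by
      have := succ_mul_catalan_eq_centralBinom (m - 1)
      have h2 := Nat.centralBinom_pos (m - 1)
      rw [← this] at h2
      exact_mod_cast Nat.pos_of_mul_pos_left h2
    have h2 : Tendsto (fun q : ℕ => Real.log (catalan (m - 1)) / (((m : ℝ) + 1) + 1 / (q : ℝ)))
        atTop (𝓝 (Real.log (catalan (m - 1)) / ((m : ℝ) + 1))) := by
      have h3 : Tendsto (fun q : ℕ => ((m : ℝ) + 1) + 1 / (q : ℝ)) atTop (𝓝 ((m : ℝ) + 1)) := by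
        simpa using (tendsto_const_nhds (x := (m : ℝ) + 1)).add
          (tendsto_const_div_atTop_nhds_zero_nat (1 : ℝ))
      exact tendsto_const_nhds.div h3 (by positivity)
    refine le_of_tendsto_of_tendsto h2 h1 ?_
    filter_upwards [eventually_ge_atTop 1] with q hq
    have hq0 : (0 : ℝ) < q := by exact_mod_cast hq
    simp only [Function.comp]
    have h4 : (q : ℝ) * Real.log (catalan (m - 1)) ≤
        Real.log (aCount m (q * (m + 1) + 1)) := by
      rw [← Real.log_pow]
      apply Real.log_le_log (by positivity)
      exact_mod_cast aCount_lower m hm q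
    have h5 : Real.log (catalan (m - 1)) / (((m : ℝ) + 1) + 1 / (q : ℝ)) =
        (q : ℝ) * Real.log (catalan (m - 1)) / ((q * (m + 1) + 1 : ℕ) : ℝ) := by
      push_cast
      field_simp
    rw [h5]
    gcongr

theorem catalan_log_lower (m : ℕ) (hm : 2 ≤ m) :
    Real.log 4 - 7 * Real.log m / m ≤ Real.log (catalan (m - 1)) / ((m : ℝ) + 1) := by
  obtain ⟨k, rfl⟩ : ∃ k, m = k + 1 := ⟨m - 1, by omega⟩
  have hk : 1 ≤ k := by omega
  simp only [Nat.add_sub_cancel]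
  have h1 := Nat.four_pow_le_two_mul_self_mul_centralBinom k (by omega)
  rw [← succ_mul_catalan_eq_centralBinom] at h1
  have h2 : (4 : ℝ) ^ k ≤ 2 * ((k + 1 : ℕ) : ℝ) ^ 2 * catalan k := by
    have : 4 ^ k ≤ 2 * (k + 1) ^ 2 * catalan k := by
      refine h1.trans ?_
      have : 2 * k * ((k + 1) * catalan k) ≤ 2 * (k + 1) * ((k + 1) * catalan k) := by
        gcongr; omega
      refine this.trans (le_of_eq (by ring))
    exact_mod_cast this
  have hC : (0 : ℝ) < catalan k := by
    have : (0 : ℝ) < 4 ^ k := by positivity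
    by_contra hcon
    have : (catalan k : ℝ) = 0 := le_antisymm (not_lt.1 hcon) (Nat.cast_nonneg _)
    rw [this] at h2
    linarith
  have h3 := Real.log_le_log (by positivity) h2
  have hm0 : (0 : ℝ) < ((k + 1 : ℕ) : ℝ) := by positivity
  rw [Real.log_pow, Real.log_mul (by positivity) hC.ne', Real.log_mul (by norm_num) (by positivity),
    Real.log_pow] at h3
  have h4 : Real.log 4 = 2 * Real.log 2 := by
    rw [show (4 : ℝ) = 2 ^ 2 by norm_num, Real.log_pow]; norm_num
  have h5 : Real.log 2 ≤ Real.log ((k + 1 : ℕ) : ℝ) := by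
    apply Real.log_le_log (by norm_num)
    exact_mod_cast hm
  have h6 : 0 < Real.log 2 := Real.log_pos (by norm_num)
  rw [le_div_iff₀ (by positivity)]
  set y := Real.log ((k + 1 : ℕ) : ℝ)
  set M := ((k + 1 : ℕ) : ℝ) with hM
  have hkM : (k : ℝ) = M - 1 := by rw [hM]; push_cast; ring
  rw [hkM, h4] at h3
  rw [h4]
  have h7 : 7 * y ≤ 7 * y / M * (M + 1) := by
    rw [div_mul_eq_mul_div, le_div_iff₀ hm0]
    nlinarith
  push_cast at h3
  nlinarith

theorem large_adjacency_estimates :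
    ∃ α : ℕ → ℝ,
      (∀ m : ℕ, 1 ≤ m →
        Filter.Tendsto (fun n : ℕ => (aCount m n : ℝ) ^ ((n : ℝ)⁻¹)) Filter.atTop
          (nhds (α m))) ∧
      (∀ m : ℕ, 1 ≤ m → α m ≤ α (m + 1)) ∧
      (∀ m : ℕ, 1 ≤ m → (catalan (m - 1) : ℝ) ^ (((m : ℝ) + 1)⁻¹) ≤ α m ∧ α m < 4) ∧
      Filter.Tendsto α Filter.atTop (nhds 4) ∧
      (∃ K : ℝ, 0 < K ∧ ∃ M : ℕ, ∀ m : ℕ, M ≤ m →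
        0 < 4 - α m ∧ 4 - α m ≤ K * Real.log m / m) := by
  choose! L hL1 hL2 hL3 using exists_growth
  refine ⟨fun m => Real.exp (L m), ?_⟩
  have hlim : ∀ m : ℕ, 1 ≤ m →
        Filter.Tendsto (fun n : ℕ => (aCount m n : ℝ) ^ ((n : ℝ)⁻¹)) Filter.atTop
          (nhds (Real.exp (L m))) := by
    intro m hm
    refine ((Real.continuous_exp.tendsto _).comp (hL1 m hm)).congr fun n => ?_
    have : (0 : ℝ) < aCount m n := by exact_mod_cast aCount_pos m n hm
    rw [Function.comp, Real.rpow_def_of_pos this, div_eq_mul_inv]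
  have hlt : ∀ m : ℕ, 1 ≤ m → Real.exp (L m) < 4 := by
    intro m hm
    rw [← Real.exp_log (show (0 : ℝ) < 4 by norm_num)]
    exact Real.exp_lt_exp.2 (hL2 m hm)
  have hquant : ∀ m : ℕ, 2 ≤ m → 4 - Real.exp (L m) ≤ 28 * Real.log m / m := by
    intro m hm
    have h1 := (catalan_log_lower m hm).trans (hL3 m (by omega))
    have h2 := Real.exp_le_exp.2 h1
    rw [sub_eq_add_neg, Real.exp_add, Real.exp_log (by norm_num)] at h2
    have h3 := Real.add_one_le_exp (-(7 * Real.log m / m))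
    have h4 : 28 * Real.log m / m = 4 * (7 * Real.log m / m) := by ring
    rw [h4]
    linarith
  refine ⟨hlim, ?_, ?_, ?_, ?_⟩
  · intro m hm
    refine le_of_tendsto_of_tendsto' (hlim m hm) (hlim (m + 1) (by omega)) fun n => ?_
    apply Real.rpow_le_rpow (Nat.cast_nonneg _) _ (by positivity)
    exact_mod_cast aCount_mono_m m n
  · intro m hm
    refine ⟨?_, hlt m hm⟩
    have hC : (0 : ℝ) < catalan (m - 1) := by
      have := succ_mul_catalan_eq_centralBinom (m - 1)
      have h2 := Nat.centralBinom_pos (m - 1)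
      rw [← this] at h2
      exact_mod_cast Nat.pos_of_mul_pos_left h2
    rw [Real.rpow_def_of_pos hC, ← div_eq_mul_inv]
    exact Real.exp_le_exp.2 (hL3 m hm)
  · have h0 : Filter.Tendsto (fun m : ℕ => 28 * Real.log m / m) Filter.atTop (nhds 0) := by
      have h1 : Filter.Tendsto (fun x : ℝ => Real.log x / x) Filter.atTop (nhds 0) :=
        Real.isLittleO_log_id_atTop.tendsto_div_nhds_zero
      have h2 := (h1.comp tendsto_natCast_atTop_atTop).const_mul (28 : ℝ)
      rw [mul_zero] at h2
      refine h2.congr fun m => ?_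
      simp only [Function.comp]
      ring
    have h3 : Filter.Tendsto (fun m : ℕ => 4 - 28 * Real.log m / m) Filter.atTop (nhds 4) := by
      simpa using (tendsto_const_nhds (x := (4 : ℝ))).sub h0
    refine tendsto_of_tendsto_of_tendsto_of_le_of_le' h3 tendsto_const_nhds ?_ ?_
    · filter_upwards [Filter.eventually_ge_atTop 2] with m hm
      have := hquant m hm
      linarith
    · filter_upwards [Filter.eventually_ge_atTop 1] with m hm
      exact (hlt m hm).le
  · refine ⟨28, by norm_num, 2, fun m hm => ⟨?_, hquant m hm⟩⟩
    have := hlt m (by omega)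
    linarith
end

section
/- For every m ≥ 1 and every n ≥ 0, the number of m-bounded 132-avoiding permutations satisfies the lower bound a_n^{(m)} ≥ C_{m−1}^{⌊n/(m+1)⌋}, where C_{m−1} is the (m−1)-st Catalan number. -/
/-- 132-avoidance for lists. -/
def LAv : List ℕ → Prop
  | [] => True
  | a :: L => L.Pairwise (fun b c => ¬ (a < c ∧ c < b)) ∧ LAv L

theorem LAv_append {A B : List ℕ} (hA : LAv A) (hB : LAv B)
    (h : ∀ a ∈ A, ∀ b ∈ B, b < a) : LAv (A ++ B) := by
  induction A with
  | nil => simpa using hB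
  | cons a A ih =>
    refine ⟨?_, ih hA.2 (fun x hx => h x (List.mem_cons_of_mem _ hx))⟩
    refine List.pairwise_append.2 ?_
    have ha : ∀ b ∈ B, b < a := h a (by simp)
    refine ⟨hA.1, ?_, ?_⟩
    · apply List.pairwise_of_forall_mem_list
      intro b hb c hc
      have := ha c hc
      omega
    · intro b hb c hc
      have := ha c hc
      omega

theorem LAv_concat {A : List ℕ} {M : ℕ} (hA : LAv A) (h : ∀ a ∈ A, a ≤ M) :
    LAv (A ++ [M]) := by
  induction A with
  | nil => simp [LAv]
  | cons a A ih =>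
    refine ⟨?_, ih hA.2 (fun x hx => h x (List.mem_cons_of_mem _ hx))⟩
    refine List.pairwise_append.2 ?_
    refine ⟨hA.1, by simp, ?_⟩
    intro b hb c hc
    have := h b (List.mem_cons_of_mem _ hb)
    simp at hc
    omega

theorem LAv_cons {A : List ℕ} {M : ℕ} (hA : LAv A) (h : ∀ a ∈ A, a ≤ M) :
    LAv (M :: A) := by
  refine ⟨?_, hA⟩
  apply List.pairwise_of_forall_mem_list
  intro b hb c hc
  have := h c hc
  omega

theorem LAv_get {L : List ℕ} (hL : LAv L) : ∀ (i j k : ℕ) (hk : k < L.length) (hij : i < j)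
    (hjk : j < k), ¬ (L[i] < L[k] ∧ L[k] < L[j]) := by
  induction L with
  | nil => intro i j k hk; simp at hk
  | cons a L ih =>
    intro i j k hk hij hjk
    obtain ⟨j, rfl⟩ : ∃ j', j = j' + 1 := ⟨j - 1, by omega⟩
    obtain ⟨k, rfl⟩ : ∃ k', k = k' + 1 := ⟨k - 1, by omega⟩
    simp only [List.length_cons] at hk
    cases i with
    | zero =>
      have := List.pairwise_iff_getElem.1 hL.1 j k (by omega) (by omega) (by omega)
      simpa using this
    | succ i =>
      have := ih hL.2 i j k (by omega) (by omega) (by omega)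
      simpa using this

/-- The 132-avoiding word of a binary tree, with values starting at `o`. -/
def tword : BinaryTree Unit → ℕ → List ℕ
  | .nil, _ => []
  | .node _ l r, o => tword l (o + r.numNodes) ++ [o + l.numNodes + r.numNodes] ++ tword r o

theorem tword_length (t : BinaryTree Unit) : ∀ o, (tword t o).length = t.numNodes := by
  induction t with
  | nil => intro o; rfl
  | node a l r ihl ihr =>
    intro o
    simp [tword, ihl, ihr, BinaryTree.numNodes]
    omega

theorem tword_mem (t : BinaryTree Unit) : ∀ o, ∀ x ∈ tword t o, o ≤ x ∧ x < o + t.numNodes := by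
  induction t with
  | nil => intro o x hx; simp [tword] at hx
  | node a l r ihl ihr =>
    intro o x hx
    simp only [tword, List.mem_append, List.mem_singleton] at hx
    simp only [BinaryTree.numNodes]
    rcases hx with (hx | hx) | hx
    · have := ihl _ x hx; omega
    · omega
    · have := ihr _ x hx; omega

theorem tword_nodup (t : BinaryTree Unit) : ∀ o, (tword t o).Nodup := by
  induction t with
  | nil => intro o; simp [tword]
  | node a l r ihl ihr =>
    intro o
    simp only [tword]
    rw [List.nodup_append, List.nodup_append]
    refine ⟨⟨ihl _, by simp, ?_⟩, ihr _, ?_⟩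
    · intro x hx y hy
      have := tword_mem _ _ x hx
      simp at hy
      omega
    · intro x hx y hy
      have hy' := tword_mem _ _ y hy
      rw [List.mem_append, List.mem_singleton] at hx
      rcases hx with hx | hx
      · have := tword_mem _ _ x hx; omega
      · omega

theorem tword_av (t : BinaryTree Unit) : ∀ o, LAv (tword t o) := by
  induction t with
  | nil => intro o; simp [tword, LAv]
  | node a l r ihl ihr =>
    intro o
    simp only [tword]
    apply LAv_append (LAv_concat (ihl _) _) (ihr _)
    · intro x hx y hy
      have hy' := tword_mem _ _ y hy
      rw [List.mem_append, List.mem_singleton] at hx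
      rcases hx with hx | hx
      · have := tword_mem _ _ x hx; omega
      · omega
    · intro x hx
      have := tword_mem _ _ x hx
      omega

theorem tword_inj (t : BinaryTree Unit) : ∀ (t' : BinaryTree Unit) (o : ℕ), tword t o = tword t' o → t = t' := by
  induction t with
  | nil =>
    intro t' o h
    cases t' with
    | nil => rfl
    | node a l r => simp [tword] at h
  | node a l r ihl ihr =>
    intro t' o h
    cases t' with
    | nil => simp [tword] at h
    | node a' l' r' =>
      have hlen := congrArg List.length h
      rw [tword_length, tword_length] at hlen
      simp only [BinaryTree.numNodes] at hlen
      have hM : o + l'.numNodes + r'.numNodes = o + l.numNodes + r.numNodes := by omega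
      simp only [tword] at h
      rw [hM] at h
      have h1 : o + l.numNodes + r.numNodes ∉ tword l (o + r.numNodes) := by
        intro hx
        have := tword_mem _ _ _ hx
        omega
      have h2 : o + l.numNodes + r.numNodes ∉ tword l' (o + r'.numNodes) := by
        intro hx
        have := tword_mem _ _ _ hx
        omega
      have h3 := congrArg (List.idxOf (o + l.numNodes + r.numNodes)) h
      simp only [List.append_assoc] at h3
      rw [List.idxOf_append_of_notMem h1, List.idxOf_append_of_notMem h2] at h3
      simp [tword_length] at h3
      have hr : r.numNodes = r'.numNodes := by omega
      simp only [List.append_assoc] at h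
      obtain ⟨e1, e2⟩ := List.append_inj h (by rw [tword_length, tword_length, h3])
      rw [← hr] at e1
      have e3 := (List.append_inj e2 rfl).2
      rw [ihl _ _ e1, ihr _ _ e3]

/-- Good words. -/
structure GoodW (m N : ℕ) (L : List ℕ) : Prop where
  len : L.length = N
  nodup : L.Nodup
  lt : ∀ x ∈ L, x < N
  av : LAv L
  chain : L.IsChain (fun a b => a ≤ b + m ∧ b ≤ a + m)
  head : ∀ x ∈ L.head?, x + 1 = N

theorem GoodW_cons {m N : ℕ} (hm : 1 ≤ m) {L : List ℕ} (h : GoodW m N L) :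
    GoodW m (N + 1) (N :: L) := by
  refine ⟨by simp [h.len], ?_, ?_, ?_, ?_, by simp⟩
  · rw [List.nodup_cons]
    exact ⟨fun hx => lt_irrefl _ (h.lt _ hx), h.nodup⟩
  · intro x hx
    rcases List.mem_cons.1 hx with rfl | hx
    · omega
    · have := h.lt x hx; omega
  · exact LAv_cons h.av (fun a ha => (h.lt a ha).le)
  · rw [List.isChain_cons]
    refine ⟨fun y hy => ?_, h.chain⟩
    have := h.head y hy
    omega

theorem GoodW_base {m : ℕ} (hm : 1 ≤ m) (r : ℕ) : ∃ L, GoodW m r L := by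
  induction r with
  | zero => exact ⟨[], by simp, by simp, by simp, trivial, by simp, by simp⟩
  | succ r ih => obtain ⟨L, h⟩ := ih; exact ⟨_, GoodW_cons hm h⟩

/-- Block word. -/
def blk (m o : ℕ) (t : BinaryTree Unit) : List ℕ := (o + m) :: (tword t (o + 1) ++ [o])

theorem blk_mem {m o : ℕ} {t : BinaryTree Unit} (hm : 1 ≤ m) (ht : t.numNodes = m - 1) :
    ∀ x ∈ blk m o t, o ≤ x ∧ x ≤ o + m := by
  intro x hx
  simp only [blk, List.mem_cons, List.mem_append, List.not_mem_nil, or_false] at hx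
  rcases hx with hx | hx | hx
  · omega
  · have := tword_mem _ _ x hx; omega
  · omega

theorem blk_length {m o : ℕ} {t : BinaryTree Unit} (hm : 1 ≤ m) (ht : t.numNodes = m - 1) :
    (blk m o t).length = m + 1 := by
  simp [blk, tword_length]; omega

theorem GoodW_blk {m N : ℕ} (hm : 1 ≤ m) {L : List ℕ} (h : GoodW m N L) {t : BinaryTree Unit}
    (ht : t.numNodes = m - 1) : GoodW m (N + (m + 1)) (blk m N t ++ L) := by
  have hmem := blk_mem (o := N) hm ht
  refine ⟨?_, ?_, ?_, ?_, ?_, ?_⟩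
  · rw [List.length_append, blk_length hm ht, h.len]; omega
  · rw [List.nodup_append]
    refine ⟨?_, h.nodup, ?_⟩
    · rw [blk, List.nodup_cons, List.nodup_append]
      refine ⟨?_, tword_nodup _ _, by simp, ?_⟩
      · intro hx
        rw [List.mem_append, List.mem_singleton] at hx
        rcases hx with hx | hx
        · have := tword_mem _ _ _ hx; omega
        · omega
      · intro x hx y hy
        have := tword_mem _ _ x hx
        simp at hy
        omega
    · intro x hx y hy
      have := hmem x hx
      have := h.lt y hy
      omega
  · intro x hx
    rcases List.mem_append.1 hx with hx | hx
    · have := hmem x hx; omega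
    · have := h.lt x hx; omega
  · apply LAv_append _ h.av
    · intro x hx y hy
      have := hmem x hx
      have := h.lt y hy
      omega
    · apply LAv_cons
      · apply LAv_append (tword_av _ _) (by simp [LAv])
        intro x hx y hy
        have := tword_mem _ _ x hx
        simp at hy
        omega
      · intro x hx
        exact (hmem x (List.mem_cons_of_mem _ hx)).2
  · rw [List.isChain_append]
    refine ⟨?_, h.chain, ?_⟩
    · apply List.Pairwise.isChain
      apply List.pairwise_of_forall_mem_list
      intro x hx y hy
      have := hmem x hx
      have := hmem y hy
      omega
    · intro x hx y hy
      have hy' := h.head y hy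
      have : x = N := by
        rw [blk, ← List.cons_append, List.getLast?_concat] at hx
        simpa using hx.symm
      omega
  · intro x hx
    simp [blk] at hx
    omega

theorem exists_family {m : ℕ} (hm : 1 ≤ m) (r q : ℕ) : ∃ F : Finset (List ℕ),
    F.card = catalan (m - 1) ^ q ∧ ∀ L ∈ F, GoodW m (r + (m + 1) * q) L := by
  classical
  induction q with
  | zero =>
    obtain ⟨L, h⟩ := GoodW_base hm r
    exact ⟨{L}, by simp, by simpa using h⟩
  | succ q ih =>
    obtain ⟨F, hF, hG⟩ := ih
    refine ⟨(BinaryTree.treesOfNumNodesEq (m - 1) ×ˢ F).image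
      (fun p => blk m (r + (m + 1) * q) p.1 ++ p.2), ?_, ?_⟩
    · rw [Finset.card_image_of_injOn, Finset.card_product, hF,
        BinaryTree.treesOfNumNodesEq_card_eq_catalan, pow_succ, mul_comm]
      rintro ⟨t, L⟩ h1 ⟨t', L'⟩ h2 h
      simp only [Finset.coe_product, Set.mem_prod, Finset.mem_coe, BinaryTree.mem_treesOfNumNodesEq]
        at h1 h2
      simp only at h
      obtain ⟨e1, e2⟩ := List.append_inj h (by rw [blk_length hm h1.1, blk_length hm h2.1])
      simp only [blk, List.cons.injEq, true_and] at e1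
      have e3 := (List.append_inj e1 (by simp [tword_length, h1.1, h2.1])).1
      rw [tword_inj _ _ _ e3, e2]
    · intro L hL
      obtain ⟨⟨t, L'⟩, hp, rfl⟩ := Finset.mem_image.1 hL
      simp only [Finset.mem_product, BinaryTree.mem_treesOfNumNodesEq] at hp
      rw [Nat.mul_succ, ← Nat.add_assoc]
      exact GoodW_blk hm (hG _ hp.2) hp.1

/-- The permutation of a good word. -/
noncomputable def toPerm {m n : ℕ} {L : List ℕ} (h : GoodW m n L) : Equiv.Perm (Fin n) :=
  Equiv.ofBijective
    (fun i : Fin n => (⟨L[i.1]'(by rw [h.len]; exact i.2), h.lt _ (List.getElem_mem _)⟩ : Fin n))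
    (Finite.injective_iff_bijective.1 (by
      intro i j hij
      have h1 := congrArg Fin.val hij
      exact Fin.ext ((h.nodup.getElem_inj_iff).1 h1)))

theorem toPerm_val {m n : ℕ} {L : List ℕ} (h : GoodW m n L) (i : Fin n) :
    ((toPerm h i : Fin n) : ℕ) = L[i.1]'(by rw [h.len]; exact i.2) := rfl

theorem catalan_lower_bound (m : ℕ) (hm : 1 ≤ m) (n : ℕ) :
    catalan (m - 1) ^ (n / (m + 1)) ≤ aCount m n := by
  obtain ⟨F, hF, hG⟩ := exists_family hm (n % (m + 1)) (n / (m + 1))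
  rw [Nat.mod_add_div] at hG
  rw [← hF, aCount, ← Nat.card_eq_finsetCard]
  refine Nat.card_le_card_of_injective
    (fun L : F => ⟨toPerm (hG L.1 L.2), ?_, ?_⟩) ?_
  · rintro ⟨i, j, k, hij, hjk, h1, h2⟩
    exact LAv_get (hG L.1 L.2).av i.1 j.1 k.1 (by rw [(hG L.1 L.2).len]; exact k.2) hij hjk ⟨h1, h2⟩
  · intro i h
    rw [toPerm_val, toPerm_val]
    have := List.isChain_iff_getElem.1 (hG L.1 L.2).chain i (by rw [(hG L.1 L.2).len]; exact h)
    rw [abs_le]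
    simp only
    omega
  · intro L L' h
    have h1 : toPerm (hG L.1 L.2) = toPerm (hG L'.1 L'.2) := congrArg Subtype.val h
    apply Subtype.ext
    apply List.ext_getElem
    · rw [(hG L.1 L.2).len, (hG L'.1 L'.2).len]
    · intro i hi hi'
      have hn : i < n := by rw [(hG L.1 L.2).len] at hi; exact hi
      have h2 := congrArg (fun p : Equiv.Perm (Fin n) => ((p ⟨i, hn⟩ : Fin n) : ℕ)) h1
      simpa only [toPerm_val] using h2
end
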